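/- Let q be a prime and let d₁, d₂ be integers coprime to q. Then ∑_{α = 0}^{q−1} S(1, αd₁; q)·S(1, αd₂; q) equals q·φ(q) if d₁ ≡ d₂ (mod q), and equals −q otherwise. -/

import Mathlib

/-!
The Kloosterman sum `S(m, a)`, as a function of `a`, has Fourier coefficients `e(m x)` at the
frequencies `x⁻¹`, and a unit factor can be moved from one argument to the other:
`S(m, a u) = S(m u, a)`. Orthogonality of characters in `a` therefore pairs `x` only with `-x`, and
`∑ₐ S(m, a d₁) S(n, a d₂) = q S(m d₁ - n d₂, 0)` for every modulus `q`. The right-hand side is a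
Ramanujan sum, which is elementary when `q` is prime.
-/

open Finset

/-- `e_q(x) = exp(2πi x / q)`. -/
noncomputable def expq (q : ℕ) (x : ℤ) : ℂ :=
  Complex.exp (2 * Real.pi * Complex.I * x / q)

/-- The Kloosterman sum `S(a, b; q) = ∑_{x ∈ (ℤ/qℤ)ˣ} e_q(a x + b x⁻¹)`. -/
noncomputable def kloos (a b : ℤ) (q : ℕ) [NeZero q] : ℂ :=
  ∑ x : (ZMod q)ˣ,
    expq q (a * ((x : ZMod q).val : ℤ) + b * ((((x⁻¹ : (ZMod q)ˣ) : ZMod q)).val : ℤ))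

lemma apply_zero_add_sum_units {G₀ M : Type*} [GroupWithZero G₀] [Fintype G₀] [Fintype G₀ˣ]
    [AddCommMonoid M] (f : G₀ → M) : f 0 + ∑ x : G₀ˣ, f x = ∑ x, f x := by
  classical
  rw [Fintype.sum_eq_add_sum_subtype_ne f 0, ← unitsEquivNeZero.sum_comp]
  rfl

lemma val_inv_add_val_inv_eq_zero_iff {R : Type*} [Ring R] {x y : Rˣ} :
    (↑x⁻¹ + ↑y⁻¹ : R) = 0 ↔ y = -x := by
  rw [add_eq_zero_iff_neg_eq, ← Units.val_neg, Units.val_inj, ← inv_neg, inv_inj, eq_comm]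

lemma sum_range_natCast_zmod {M : Type*} [AddCommMonoid M] (q : ℕ) [NeZero q] (f : ZMod q → M) :
    ∑ k ∈ range q, f k = ∑ a, f a :=
  sum_bij' (fun k _ ↦ (k : ZMod q)) (fun a _ ↦ a.val) (fun _ _ ↦ mem_univ _)
    (fun a _ ↦ mem_range.2 a.val_lt) (fun _ hk ↦ ZMod.val_cast_of_lt (mem_range.1 hk))
    (fun a _ ↦ ZMod.natCast_zmod_val a) fun _ _ ↦ rfl

section KloostermanSum

variable {R R' : Type*} [CommRing R] [Fintype Rˣ] [CommRing R']

/-- The Kloosterman sum of an additive character `ψ` of a ring with finitely many units. It is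
`kloos` when `ψ` is the standard character of `ZMod q`, and a Ramanujan sum when `b = 0`. -/
def kloostermanSum (ψ : AddChar R R') (a b : R) : R' :=
  ∑ x : Rˣ, ψ (a * x + b * ↑x⁻¹)

lemma kloostermanSum_mul_unit_right (ψ : AddChar R R') (a b : R) (u : Rˣ) :
    kloostermanSum ψ a (b * u) = kloostermanSum ψ (a * u) b := by
  refine Fintype.sum_equiv (Equiv.mulLeft u⁻¹) _ _ fun x ↦ congrArg ψ ?_
  simp only [Equiv.coe_mulLeft, mul_inv_rev, inv_inv, Units.val_mul]
  linear_combination (-a * x) * u.mul_inv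

lemma sum_kloostermanSum_mul_kloostermanSum [Fintype R] [IsDomain R'] {ψ : AddChar R R'}
    (hψ : ψ.IsPrimitive) (m n : R) :
    ∑ a, kloostermanSum ψ m a * kloostermanSum ψ n a
      = Fintype.card R * kloostermanSum ψ (m - n) 0 := by
  classical
  have sum_char_mul_char (x y : Rˣ) : ∑ a, ψ (m * x + a * ↑x⁻¹) * ψ (n * y + a * ↑y⁻¹)
      = if y = -x then Fintype.card R * ψ (m * x + n * y) else 0 := by
    calc ∑ a, ψ (m * x + a * ↑x⁻¹) * ψ (n * y + a * ↑y⁻¹)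
        = ∑ a, ψ (m * x + n * y) * ψ (a * (↑x⁻¹ + ↑y⁻¹)) := by
          refine sum_congr rfl fun a _ ↦ ?_
          rw [← AddChar.map_add_eq_mul, ← AddChar.map_add_eq_mul]
          ring_nf
      _ = if y = -x then Fintype.card R * ψ (m * x + n * y) else 0 := by
          rw [← mul_sum, AddChar.sum_mulShift _ hψ, mul_comm]
          simp only [val_inv_add_val_inv_eq_zero_iff, Nat.cast_ite, Nat.cast_zero, ite_mul,
            zero_mul]
  calc ∑ a, kloostermanSum ψ m a * kloostermanSum ψ n a
      = ∑ x : Rˣ, ∑ y : Rˣ, ∑ a, ψ (m * x + a * ↑x⁻¹) * ψ (n * y + a * ↑y⁻¹) := by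
        simp only [kloostermanSum, sum_mul_sum]
        rw [sum_comm]
        exact sum_congr rfl fun x _ ↦ sum_comm
    _ = ∑ x : Rˣ, Fintype.card R * ψ (m * x + n * ↑(-x)) := by
        simp only [sum_char_mul_char, sum_ite_eq', mem_univ, if_true]
    _ = Fintype.card R * kloostermanSum ψ (m - n) 0 := by
        rw [← mul_sum, kloostermanSum]
        congr! 3
        push_cast
        ring

lemma kloostermanSum_zero_right_of_field {F : Type*} [Field F] [Fintype F] [DecidableEq F]
    [IsDomain R'] {ψ : AddChar F R'} (hψ : ψ.IsPrimitive) (c : F) :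
    kloostermanSum ψ c 0 = if c = 0 then (Fintype.card F : R') - 1 else -1 := by
  have one_add_sum : 1 + kloostermanSum ψ c 0 = if c = 0 then (Fintype.card F : R') else 0 := by
    simpa [kloostermanSum, mul_comm c, AddChar.sum_mulShift c hψ] using
      apply_zero_add_sum_units fun x ↦ ψ (x * c)
  rw [eq_sub_of_add_eq' one_add_sum]
  split_ifs <;> ring

end KloostermanSum

lemma expq_eq_stdAddChar (q : ℕ) [NeZero q] (x : ℤ) : expq q x = ZMod.stdAddChar (x : ZMod q) :=
  (ZMod.stdAddChar_coe x).symm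

lemma kloos_eq_kloostermanSum (a b : ℤ) (q : ℕ) [NeZero q] :
    kloos a b q = kloostermanSum (ZMod.stdAddChar (N := q)) a b := by
  refine sum_congr rfl fun x _ ↦ ?_
  rw [expq_eq_stdAddChar]
  push_cast
  simp only [ZMod.natCast_zmod_val]

lemma kloos_zero_right_of_prime {q : ℕ} [NeZero q] (hq : q.Prime) (c : ℤ) :
    kloos c 0 q = if (q : ℤ) ∣ c then (q.totient : ℂ) else -1 := by
  have : Fact q.Prime := ⟨hq⟩
  rw [kloos_eq_kloostermanSum, Int.cast_zero,
    kloostermanSum_zero_right_of_field (ZMod.isPrimitive_stdAddChar q), ZMod.card,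
    Nat.totient_prime hq, Nat.cast_pred hq.pos]
  simp only [ZMod.intCast_zmod_eq_zero_iff_dvd]

theorem sum_kloos_mul_kloos_general (q : ℕ) [NeZero q] (m n : ℤ) {d₁ d₂ : ℤ}
    (h₁ : IsCoprime d₁ (q : ℤ)) (h₂ : IsCoprime d₂ (q : ℤ)) :
    ∑ α ∈ range q, kloos m ((α : ℤ) * d₁) q * kloos n ((α : ℤ) * d₂) q
      = q * kloos (m * d₁ - n * d₂) 0 q := by
  let K : ZMod q → ZMod q → ℂ := kloostermanSum ZMod.stdAddChar
  have move_unit (m d : ℤ) (h : IsCoprime d (q : ℤ)) (a : ZMod q) : K m (a * d) = K (m * d) a := by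
    simpa only [ZMod.coe_unitOfIsCoprime] using
      kloostermanSum_mul_unit_right ZMod.stdAddChar (m : ZMod q) a (ZMod.unitOfIsCoprime d h)
  calc ∑ α ∈ range q, kloos m ((α : ℤ) * d₁) q * kloos n ((α : ℤ) * d₂) q
      = ∑ α ∈ range q, K (m * d₁) α * K (n * d₂) α := by
        simp only [kloos_eq_kloostermanSum, Int.cast_mul, Int.cast_natCast, ← move_unit _ _ h₁,
          ← move_unit _ _ h₂, K]
    _ = ∑ a, K (m * d₁) a * K (n * d₂) a :=
        sum_range_natCast_zmod q fun a ↦ K (m * d₁) a * K (n * d₂) a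
    _ = q * K (m * d₁ - n * d₂) 0 := by
        rw [sum_kloostermanSum_mul_kloostermanSum (ZMod.isPrimitive_stdAddChar q), ZMod.card]
    _ = q * kloos (m * d₁ - n * d₂) 0 q := by
        rw [kloos_eq_kloostermanSum]
        push_cast
        rfl

/-- For a prime `q` and integers `d₁`, `d₂` coprime to `q`,
`∑_{α=0}^{q−1} S(1, αd₁; q) S(1, αd₂; q)` equals `q·φ(q)` if `d₁ ≡ d₂ (mod q)`,
and `−q` otherwise. -/
theorem sum_kloos_mul_kloos (q : ℕ) [NeZero q] (hq : q.Prime) (d₁ d₂ : ℤ)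
    (h₁ : IsCoprime d₁ (q : ℤ)) (h₂ : IsCoprime d₂ (q : ℤ)) :
    ∑ α ∈ Finset.range q, kloos 1 ((α : ℤ) * d₁) q * kloos 1 ((α : ℤ) * d₂) q
      = if (q : ℤ) ∣ (d₁ - d₂) then (q : ℂ) * q.totient else -(q : ℂ) := by
  simpa [kloos_zero_right_of_prime hq] using sum_kloos_mul_kloos_general q 1 1 h₁ h₂
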